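/- Let T = (U, V) be a nondegenerate t-structure in a triangulated category T with arbitrary coproducts, with heart H and cohomological functor H⁰ : T → H. Then H⁰ preserves coproducts (where coproducts in H are computed as H⁰ applied to the coproduct in T) if and only if V is closed under coproducts in T. -/

import Mathlib

open CategoryTheory Limits Pretriangulated

universe w v u

variable {C : Type u} [Category.{v} C] [Preadditive C] [HasZeroObject C] [HasShift C ℤ]
  [∀ n : ℤ, (shiftFunctor C n).Additive] [Pretriangulated C]

/-- `X` is a direct summand (retract) of `Y`. -/
def IsSummand {C : Type u} [Category.{v} C] (X Y : C) : Prop :=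
  ∃ (i : X ⟶ Y) (r : Y ⟶ X), i ≫ r = 𝟙 X

/-- A torsion pair `(𝒰, 𝒱)` in a triangulated category: both classes are closed under
direct summands, all morphisms from `𝒰` to `𝒱` vanish, and every object fits
in a triangle `U ⟶ X ⟶ V ⟶ U⟦1⟧` with `U ∈ 𝒰` and `V ∈ 𝒱`. -/
structure TorsionPair (𝒰 𝒱 : Set C) : Prop where
  summand_left : ∀ ⦃X Y : C⦄, IsSummand X Y → Y ∈ 𝒰 → X ∈ 𝒰
  summand_right : ∀ ⦃X Y : C⦄, IsSummand X Y → Y ∈ 𝒱 → X ∈ 𝒱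
  hom_zero : ∀ ⦃X Y : C⦄, X ∈ 𝒰 → Y ∈ 𝒱 → ∀ f : X ⟶ Y, f = 0
  exists_triangle : ∀ X : C, ∃ (U V : C) (_ : U ∈ 𝒰) (_ : V ∈ 𝒱)
    (f : U ⟶ X) (g : X ⟶ V) (h : V ⟶ U⟦(1 : ℤ)⟧), Triangle.mk f g h ∈ distTriang C


/-- Functorial truncation data for a torsion pair `(𝒰, 𝒱)`: truncation functors `u` and `v`,
right resp. left adjoint to the inclusions, with counit `ι`, unit `π` and connecting maps
forming the truncation triangles `u(X) ⟶ X ⟶ v(X) ⟶ u(X)⟦1⟧`. -/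
structure TruncationFunctors (𝒰 𝒱 : Set C) where
  u : C ⥤ C
  v : C ⥤ C
  ι : u ⟶ 𝟭 C
  π : 𝟭 C ⟶ v
  δ : ∀ X : C, v.obj X ⟶ (u.obj X)⟦(1 : ℤ)⟧
  mem_u : ∀ X : C, u.obj X ∈ 𝒰
  mem_v : ∀ X : C, v.obj X ∈ 𝒱
  triangle : ∀ X : C, Triangle.mk (ι.app X) (π.app X) (δ X) ∈ distTriang C
  adj_u : ∀ (A X : C), A ∈ 𝒰 → Function.Bijective (fun g : A ⟶ u.obj X => g ≫ ι.app X)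
  adj_v : ∀ (X B : C), B ∈ 𝒱 → Function.Bijective (fun g : v.obj X ⟶ B => π.app X ≫ g)

/-- The cohomological functor `H⁰(X) = v(u(X⟦1⟧)⟦-1⟧)` associated to a t-structure with
truncation functors `d`. -/
def H0 {𝒰 𝒱 : Set C} (d : TruncationFunctors 𝒰 𝒱) : C ⥤ C :=
  shiftFunctor C (1 : ℤ) ⋙ d.u ⋙ shiftFunctor C (-1 : ℤ) ⋙ d.v

/-- The heart `𝒰⟦-1⟧ ∩ 𝒱` of the t-structure `(𝒰, 𝒱)`. -/
def heart (𝒰 𝒱 : Set C) : Set C := {X : C | X⟦(1 : ℤ)⟧ ∈ 𝒰 ∧ X ∈ 𝒱}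

section aux

/-- Shifts of coproduct cofans are coproduct cofans. -/
noncomputable def sigmaShiftColimit {I : Type w} (X : I → C) [HasCoproduct X] (n : ℤ) :
    IsColimit (Cofan.mk ((∐ X)⟦n⟧) (fun i => (Sigma.ι X i)⟦n⟧')) :=
  isColimitOfHasCoproductOfPreservesColimit (shiftFunctor C n) X

lemma exists_sigmaShift_desc {I : Type w} (X : I → C) [HasCoproduct X] (n : ℤ) {W : C}
    (k : ∀ i, (X i)⟦n⟧ ⟶ W) : ∃ g : (∐ X)⟦n⟧ ⟶ W, ∀ i, (Sigma.ι X i)⟦n⟧' ≫ g = k i :=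
  ⟨Cofan.IsColimit.desc (sigmaShiftColimit X n) k,
    fun i => Cofan.IsColimit.fac (sigmaShiftColimit X n) k i⟩

lemma sigmaShift_hom_ext {I : Type w} (X : I → C) [HasCoproduct X] (n : ℤ) {W : C}
    (g g' : (∐ X)⟦n⟧ ⟶ W) (h : ∀ i, (Sigma.ι X i)⟦n⟧' ≫ g = (Sigma.ι X i)⟦n⟧' ≫ g') : g = g' :=
  Cofan.IsColimit.hom_ext (sigmaShiftColimit X n) g g' h

/-- A coproduct of distinguished triangles: the cone of the coproduct of the first maps is
the coproduct of the third objects. -/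
lemma exists_coproduct_triangle {I : Type w} (T : I → Triangle C) (hT : ∀ i, T i ∈ distTriang C)
    [HasCoproduct (fun i => (T i).obj₁)] [HasCoproduct (fun i => (T i).obj₂)]
    [HasCoproduct (fun i => (T i).obj₃)] :
    ∃ (Z : C) (_ : Z ≅ ∐ (fun i => (T i).obj₃))
      (g : (∐ fun i => (T i).obj₂) ⟶ Z) (k : Z ⟶ (∐ fun i => (T i).obj₁)⟦(1 : ℤ)⟧),
      Triangle.mk (Limits.Sigma.map (fun i => (T i).mor₁)) g k ∈ distTriang C := by
  obtain ⟨Z, g, k, hZ⟩ := distinguished_cocone_triangle (Limits.Sigma.map (fun i => (T i).mor₁))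
  refine ⟨Z, ?_, g, k, hZ⟩
  have hφ : ∀ i, ∃ φ : (T i).obj₃ ⟶ Z,
      (T i).mor₂ ≫ φ = Sigma.ι (fun i => (T i).obj₂) i ≫ g ∧
      (T i).mor₃ ≫ (Sigma.ι (fun i => (T i).obj₁) i)⟦(1 : ℤ)⟧' = φ ≫ k := fun i =>
    complete_distinguished_triangle_morphism _ _ (hT i) hZ
      (Sigma.ι (fun i => (T i).obj₁) i) (Sigma.ι (fun i => (T i).obj₂) i)
      (Limits.Sigma.ι_map (fun i => (T i).mor₁) i).symm
  choose φ hφ₂ hφ₃ using hφ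
  let θ : (∐ fun i => (T i).obj₃) ⟶ Z := Sigma.desc φ
  have hθ : ∀ i, Sigma.ι (fun i => (T i).obj₃) i ≫ θ = φ i := fun i => by simp [θ]
  have inj : ∀ {W : C} (f : Z ⟶ W), θ ≫ f = 0 → f = 0 := by
    intro W f hf
    have hf' : ∀ i, φ i ≫ f = 0 := fun i => by rw [← hθ, Category.assoc, hf, comp_zero]
    obtain ⟨a, ha⟩ := Triangle.yoneda_exact₃ _ hZ f (by
      apply Limits.Sigma.hom_ext
      intro i
      change Sigma.ι (fun i => (T i).obj₂) i ≫ g ≫ f = Sigma.ι (fun i => (T i).obj₂) i ≫ 0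
      rw [← Category.assoc, ← hφ₂, Category.assoc, hf', comp_zero, comp_zero])
    change (∐ fun i => (T i).obj₁)⟦(1 : ℤ)⟧ ⟶ W at a
    change f = k ≫ a at ha
    have hzero : ∀ i, (T i).mor₃ ≫ (Sigma.ι (fun i => (T i).obj₁) i)⟦(1 : ℤ)⟧' ≫ a = 0 := by
      intro i
      rw [← Category.assoc, hφ₃, Category.assoc, ← ha, hf']
    have hb : ∀ i, ∃ b : (T i).obj₂⟦(1 : ℤ)⟧ ⟶ W,
        (Sigma.ι (fun i => (T i).obj₁) i)⟦(1 : ℤ)⟧' ≫ a = (T i).mor₁⟦(1 : ℤ)⟧' ≫ b := by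
      intro i
      obtain ⟨b, hb⟩ := Triangle.yoneda_exact₃ _ (rot_of_distTriang _ (hT i))
        ((Sigma.ι (fun i => (T i).obj₁) i)⟦(1 : ℤ)⟧' ≫ a) (hzero i)
      change (T i).obj₂⟦(1 : ℤ)⟧ ⟶ W at b
      refine ⟨-b, hb.trans ?_⟩
      change (-(T i).mor₁⟦(1 : ℤ)⟧') ≫ b = _
      rw [Preadditive.neg_comp, Preadditive.comp_neg]
    choose b hb using hb
    obtain ⟨b', hb'⟩ := exists_sigmaShift_desc (fun i => (T i).obj₂) 1 b
    have : a = (Limits.Sigma.map (fun i => (T i).mor₁))⟦(1 : ℤ)⟧' ≫ b' := by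
      apply sigmaShift_hom_ext
      intro i
      rw [hb, ← hb', ← Category.assoc, ← Category.assoc, ← Functor.map_comp, ← Functor.map_comp]
      simp
    have h31 := comp_distTriang_mor_zero₃₁ _ hZ
    change k ≫ (Limits.Sigma.map (fun i => (T i).mor₁))⟦(1 : ℤ)⟧' = 0 at h31
    rw [ha, this, ← Category.assoc, h31, zero_comp]
  have surj : ∃ r : Z ⟶ ∐ fun i => (T i).obj₃, θ ≫ r = 𝟙 _ := by
    have hzero : Limits.Sigma.map (fun i => (T i).mor₁) ≫ Limits.Sigma.map (fun i => (T i).mor₂)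
        = 0 := by
      apply Limits.Sigma.hom_ext
      intro i
      have := comp_distTriang_mor_zero₁₂ _ (hT i)
      simp [reassoc_of% this]
    obtain ⟨c, hc⟩ := Triangle.yoneda_exact₂ _ hZ
      (Limits.Sigma.map (fun i => (T i).mor₂)) hzero
    change Z ⟶ ∐ fun i => (T i).obj₃ at c
    change _ = g ≫ c at hc
    have hd : ∀ i, ∃ e : (T i).obj₁⟦(1 : ℤ)⟧ ⟶ ∐ fun i => (T i).obj₃,
        Sigma.ι (fun i => (T i).obj₃) i - φ i ≫ c = (T i).mor₃ ≫ e := by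
      intro i
      apply Triangle.yoneda_exact₃ _ (hT i)
      rw [Preadditive.comp_sub, ← Category.assoc, hφ₂, Category.assoc, ← hc]
      simp
    choose e he using hd
    obtain ⟨e', he'⟩ := exists_sigmaShift_desc (fun i => (T i).obj₁) 1 e
    refine ⟨c + k ≫ e', ?_⟩
    apply Limits.Sigma.hom_ext
    intro i
    rw [← Category.assoc, hθ, Preadditive.comp_add, ← Category.assoc, ← hφ₃, Category.assoc, he',
      ← he]
    simp
  let r := surj.choose
  have hr : θ ≫ r = 𝟙 _ := surj.choose_spec
  exact ⟨r, θ, by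
    have := inj (r ≫ θ - 𝟙 Z) (by
      rw [Preadditive.comp_sub, ← Category.assoc, hr]; simp)
    exact sub_eq_zero.1 this, hr⟩

variable {𝒰 𝒱 : Set C}

lemma TorsionPair.left_iso (h : TorsionPair 𝒰 𝒱) {X Y : C} (e : X ≅ Y) (hY : Y ∈ 𝒰) : X ∈ 𝒰 :=
  h.summand_left ⟨e.hom, e.inv, e.hom_inv_id⟩ hY

lemma TorsionPair.right_iso (h : TorsionPair 𝒰 𝒱) {X Y : C} (e : X ≅ Y) (hY : Y ∈ 𝒱) : X ∈ 𝒱 :=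
  h.summand_right ⟨e.hom, e.inv, e.hom_inv_id⟩ hY

lemma TorsionPair.mem_left (h : TorsionPair 𝒰 𝒱) {X : C}
    (hX : ∀ (B : C), B ∈ 𝒱 → ∀ f : X ⟶ B, f = 0) : X ∈ 𝒰 := by
  obtain ⟨U, V, hU, hV, f, g, k, hT⟩ := h.exists_triangle X
  obtain ⟨s, hs⟩ := Triangle.coyoneda_exact₂ _ hT (𝟙 X) (by
    change 𝟙 X ≫ g = 0
    rw [hX V hV g, comp_zero])
  exact h.summand_left ⟨s, f, hs.symm⟩ hU

lemma TorsionPair.mem_right (h : TorsionPair 𝒰 𝒱) {X : C}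
    (hX : ∀ (B : C), B ∈ 𝒰 → ∀ f : B ⟶ X, f = 0) : X ∈ 𝒱 := by
  obtain ⟨U, V, hU, hV, f, g, k, hT⟩ := h.exists_triangle X
  obtain ⟨s, hs⟩ := Triangle.yoneda_exact₂ _ hT (𝟙 X) (by
    change f ≫ 𝟙 X = 0
    rw [hX U hU f, zero_comp])
  exact h.summand_right ⟨g, s, hs.symm⟩ hV

lemma TorsionPair.left_shift (h : TorsionPair 𝒰 𝒱) (ht : ∀ X ∈ 𝒰, X⟦(1 : ℤ)⟧ ∈ 𝒰)
    {X : C} (hX : X ∈ 𝒰) (n : ℕ) : X⟦(n : ℤ)⟧ ∈ 𝒰 := by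
  induction n with
  | zero => exact h.left_iso ((shiftFunctorZero C ℤ).app X) hX
  | succ n ih =>
    exact h.left_iso ((shiftFunctorAdd' C (n : ℤ) 1 ((n + 1 : ℕ) : ℤ) (by simp)).app X) (ht _ ih)

lemma TorsionPair.right_shift (h : TorsionPair 𝒰 𝒱) (ht : ∀ X ∈ 𝒰, X⟦(1 : ℤ)⟧ ∈ 𝒰)
    {X : C} (hX : X ∈ 𝒱) (n : ℕ) : X⟦(-n : ℤ)⟧ ∈ 𝒱 := by
  apply h.mem_right
  intro B hB f
  apply (shiftFunctor C (n : ℤ)).map_injective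
  rw [Functor.map_zero]
  exact h.hom_zero (h.left_shift ht hB n)
    (h.right_iso ((shiftFunctorCompIsoId C (-n : ℤ) n (by simp)).app X) hX) _

lemma TorsionPair.left_coproduct (h : TorsionPair 𝒰 𝒱) {I : Type w} (X : I → C) [HasCoproduct X]
    (hX : ∀ i, X i ∈ 𝒰) : (∐ X) ∈ 𝒰 := by
  apply h.mem_left
  intro B hB f
  apply Limits.Sigma.hom_ext
  intro i
  rw [comp_zero]
  exact h.hom_zero (hX i) hB _

lemma TorsionPair.bijective (h : TorsionPair 𝒰 𝒱) (ht : ∀ X ∈ 𝒰, X⟦(1 : ℤ)⟧ ∈ 𝒰)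
    (T : Triangle C) (hT : T ∈ distTriang C) (h₃ : T.obj₃ ∈ 𝒱)
    {B : C} (hB : B ∈ 𝒰) : Function.Bijective (fun g : B ⟶ T.obj₁ => g ≫ T.mor₁) := by
  constructor
  · intro g g' hg
    dsimp at hg
    rw [← sub_eq_zero]
    obtain ⟨s, hs⟩ := Triangle.coyoneda_exact₂ _ (inv_rot_of_distTriang _ hT) (g - g') (by
      change (g - g') ≫ T.mor₁ = 0
      rw [Preadditive.sub_comp, hg, sub_self])
    change B ⟶ T.obj₃⟦(-1 : ℤ)⟧ at s
    have : s = 0 := h.hom_zero hB (by simpa using h.right_shift ht h₃ 1) s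
    rw [hs, this]
    exact zero_comp
  · intro f
    obtain ⟨s, hs⟩ := Triangle.coyoneda_exact₂ _ hT f (h.hom_zero hB h₃ _)
    exact ⟨s, hs.symm⟩

lemma TorsionPair.nonempty_iso (h : TorsionPair 𝒰 𝒱) (ht : ∀ X ∈ 𝒰, X⟦(1 : ℤ)⟧ ∈ 𝒰)
    (d : TruncationFunctors 𝒰 𝒱)
    (T : Triangle C) (hT : T ∈ distTriang C) (h₁ : T.obj₁ ∈ 𝒰) (h₃ : T.obj₃ ∈ 𝒱) :
    ∃ e : T.obj₁ ≅ d.u.obj T.obj₂, e.hom ≫ d.ι.app T.obj₂ = T.mor₁ := by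
  obtain ⟨s, hs⟩ := (d.adj_u T.obj₁ T.obj₂ h₁).2 T.mor₁
  obtain ⟨t, ht'⟩ := (h.bijective ht T hT h₃ (d.mem_u T.obj₂)).2 (d.ι.app T.obj₂)
  dsimp at hs ht'
  refine ⟨⟨s, t, (h.bijective ht T hT h₃ h₁).1 ?_, (d.adj_u _ _ (d.mem_u T.obj₂)).1 ?_⟩, hs⟩
  · simp [ht', hs]
  · simp [ht', hs]

lemma TorsionPair.u_preserves [HasCoproducts.{w} C] (h : TorsionPair 𝒰 𝒱)
    (ht : ∀ X ∈ 𝒰, X⟦(1 : ℤ)⟧ ∈ 𝒰) (d : TruncationFunctors 𝒰 𝒱)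
    (hV : ∀ (I : Type w) (X : I → C), (∀ i, X i ∈ 𝒱) → (∐ X) ∈ 𝒱) (I : Type w) :
    PreservesColimitsOfShape (Discrete I) d.u := by
  apply +allowSynthFailures preservesColimitsOfShape_of_discrete
  intro Y
  obtain ⟨Z, eZ, g, k, hT⟩ := exists_coproduct_triangle
    (fun i => Triangle.mk (d.ι.app (Y i)) (d.π.app (Y i)) (d.δ (Y i))) (fun i => d.triangle (Y i))
  obtain ⟨e, he⟩ := h.nonempty_iso ht d _ hT
    (h.left_coproduct _ (fun i => d.mem_u (Y i)))
    (h.right_iso eZ (hV I _ (fun i => d.mem_v (Y i))))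
  change (∐ fun i => d.u.obj (Y i)) ≅ d.u.obj (∐ Y) at e
  change e.hom ≫ d.ι.app (∐ Y) = Limits.Sigma.map (fun i => d.ι.app (Y i)) at he
  have : sigmaComparison d.u Y = e.hom := by
    apply (d.adj_u _ _ (h.left_coproduct _ (fun i => d.mem_u (Y i)))).1
    dsimp
    rw [he]
    apply Limits.Sigma.hom_ext
    intro i
    simp
  have : IsIso (sigmaComparison d.u Y) := by rw [this]; infer_instance
  exact PreservesCoproduct.of_iso_comparison d.u Y

lemma TruncationFunctors.v_hom_ext (d : TruncationFunctors 𝒰 𝒱) {X B : C} (hB : B ∈ 𝒱)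
    {f g : d.v.obj X ⟶ B} (hfg : d.π.app X ≫ f = d.π.app X ≫ g) : f = g :=
  (d.adj_v X B hB).1 hfg

lemma TorsionPair.H0_mem (h : TorsionPair 𝒰 𝒱) (ht : ∀ X ∈ 𝒰, X⟦(1 : ℤ)⟧ ∈ 𝒰)
    (d : TruncationFunctors 𝒰 𝒱) (X : C) : (H0 d).obj X ∈ heart 𝒰 𝒱 := by
  refine ⟨?_, d.mem_v _⟩
  let P : C := (d.u.obj (X⟦(1 : ℤ)⟧))⟦(-1 : ℤ)⟧
  have hP : P⟦(1 : ℤ)⟧ ∈ 𝒰 := h.left_iso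
    ((shiftFunctorCompIsoId C (-1 : ℤ) 1 (by simp)).app _) (d.mem_u _)
  change (d.v.obj P)⟦(1 : ℤ)⟧ ∈ 𝒰
  apply h.mem_left
  intro B hB f
  obtain ⟨s, hs⟩ := Triangle.yoneda_exact₂ _
    (Triangle.shift_distinguished _ (rot_of_distTriang _ (d.triangle P)) 1) f
    (h.hom_zero hP hB _)
  change ((d.u.obj P)⟦(1 : ℤ)⟧)⟦(1 : ℤ)⟧ ⟶ B at s
  have : s = 0 := h.hom_zero (ht _ (ht _ (d.mem_u P))) hB s
  rw [hs, this]
  exact comp_zero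

/-- `H⁰` kills strictly coconnective objects, as seen by maps to `𝒱`. -/
lemma TorsionPair.H0_hom_zero (h : TorsionPair 𝒰 𝒱)
    (d : TruncationFunctors 𝒰 𝒱) {X W : C} (hX : X⟦(1 : ℤ)⟧ ∈ 𝒱) (hW : W ∈ 𝒱)
    (f : (H0 d).obj X ⟶ W) : f = 0 := by
  have hu : IsZero (d.u.obj (X⟦(1 : ℤ)⟧)) := by
    rw [IsZero.iff_id_eq_zero]
    apply (d.adj_u _ _ (d.mem_u _)).1
    exact (h.hom_zero (d.mem_u _) hX _).trans (h.hom_zero (d.mem_u _) hX _).symm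
  have hu' := (shiftFunctor C (-1 : ℤ)).map_isZero hu
  exact d.v_hom_ext hW (hu'.eq_of_src _ _)

lemma existsUnique_of_colimit {C : Type u} [Category.{v} C] (F G : C ⥤ C) (π : 𝟭 C ⟶ G)
    {I : Type w} (X : I → C) [HasCoproduct X]
    (W : C) (hW : ∀ Y : C, Function.Bijective (fun g : G.obj Y ⟶ W => π.app Y ≫ g))
    (hc : IsColimit (Cofan.mk (F.obj (∐ X)) (fun i => F.map (Sigma.ι X i))))
    (f : ∀ i, G.obj (F.obj (X i)) ⟶ W) :
    ∃! g : G.obj (F.obj (∐ X)) ⟶ W, ∀ i, G.map (F.map (Sigma.ι X i)) ≫ g = f i := by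
  have nat : ∀ i, F.map (Sigma.ι X i) ≫ π.app (F.obj (∐ X)) =
      π.app (F.obj (X i)) ≫ G.map (F.map (Sigma.ι X i)) :=
    fun i => π.naturality (F.map (Sigma.ι X i))
  let g₀ : F.obj (∐ X) ⟶ W := Cofan.IsColimit.desc hc (fun i => π.app (F.obj (X i)) ≫ f i)
  have hg₀ : ∀ i, F.map (Sigma.ι X i) ≫ g₀ = π.app (F.obj (X i)) ≫ f i :=
    fun i => Cofan.IsColimit.fac hc _ i
  obtain ⟨g, hg⟩ := (hW (F.obj (∐ X))).2 g₀
  dsimp only at hg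
  have hext : ∀ {Y : C} {a b : G.obj Y ⟶ W}, π.app Y ≫ a = π.app Y ≫ b → a = b :=
    fun {Y} _ _ hab => (hW Y).1 hab
  refine ⟨g, fun i => hext ?_, fun g' hg' => hext ?_⟩
  · rw [← hg₀, ← hg, ← Category.assoc, ← nat, Category.assoc]
  · have key : ∀ i, F.map (Sigma.ι X i) ≫ π.app (F.obj (∐ X)) ≫ g' =
        F.map (Sigma.ι X i) ≫ π.app (F.obj (∐ X)) ≫ g := by
      intro i
      rw [hg, hg₀, ← Category.assoc, nat, Category.assoc, hg']
    exact Cofan.IsColimit.hom_ext hc _ _ key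

end aux

/-- For a nondegenerate t-structure `(𝒰, 𝒱)` in a triangulated category with coproducts,
the cohomological functor `H⁰` preserves coproducts (i.e. `H⁰(∐ Xᵢ)`, with the images of the
coproduct inclusions, is the coproduct of the `H⁰(Xᵢ)` in the heart) if and only if `𝒱` is
closed under coproducts taken in `T`. -/
theorem stmt10 [HasCoproducts.{w} C] (𝒰 𝒱 : Set C) (h : TorsionPair 𝒰 𝒱)
    (ht : ∀ X ∈ 𝒰, X⟦(1 : ℤ)⟧ ∈ 𝒰)
    (hnd₁ : ∀ X : C, (∀ n : ℤ, X⟦n⟧ ∈ 𝒰) → IsZero X)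
    (hnd₂ : ∀ X : C, (∀ n : ℤ, X⟦n⟧ ∈ 𝒱) → IsZero X)
    (d : TruncationFunctors 𝒰 𝒱) :
    (∀ (I : Type w) (X : I → C) (W : C), W ∈ heart 𝒰 𝒱 →
        ∀ f : ∀ i, (H0 d).obj (X i) ⟶ W,
          ∃! g : (H0 d).obj (∐ X) ⟶ W, ∀ i, (H0 d).map (Sigma.ι X i) ≫ g = f i) ↔
      (∀ (I : Type w) (X : I → C), (∀ i, X i ∈ 𝒱) → (∐ X) ∈ 𝒱) := by
  constructor
  · intro H I X hX
    -- vanishing of the negative cohomology of the coproduct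
    have key : ∀ n : ℕ, IsZero ((H0 d).obj ((∐ X)⟦(-(n + 1 : ℕ) : ℤ)⟧)) := by
      intro n
      have hz : IsZero ((H0 d).obj (∐ fun i => (X i)⟦(-(n + 1 : ℕ) : ℤ)⟧)) := by
        rw [IsZero.iff_id_eq_zero]
        refine (H I (fun i => (X i)⟦(-(n + 1 : ℕ) : ℤ)⟧) _ (h.H0_mem ht d _)
          (fun _ => 0)).unique ?_ (fun i => comp_zero)
        intro i
        refine h.H0_hom_zero d ?_ (d.mem_v _) _
        exact h.right_iso ((shiftFunctorAdd' C (-(n + 1 : ℕ) : ℤ) 1 (-n : ℤ)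
          (by push_cast; ring)).app (X i)).symm (h.right_shift ht (hX i) n)
      exact hz.of_iso ((H0 d).mapIso
        (PreservesCoproduct.iso (shiftFunctor C (-(n + 1 : ℕ) : ℤ)) X))
    have hneg : ∀ n : ℕ, (d.u.obj (∐ X))⟦(-n : ℤ)⟧ ∈ 𝒰 := by
      intro n
      induction n with
      | zero =>
        have := h.left_shift ht (d.mem_u (∐ X)) 0
        simpa using this
      | succ n ih =>
        obtain ⟨e, -⟩ := h.nonempty_iso ht d _
          (Triangle.shift_distinguished _ (d.triangle (∐ X)) (-n : ℤ)) ih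
          (h.right_shift ht (d.mem_v (∐ X)) n)
        change (d.u.obj (∐ X))⟦(-n : ℤ)⟧ ≅ d.u.obj ((∐ X)⟦(-n : ℤ)⟧) at e
        let e' := d.u.mapIso ((shiftFunctorAdd' C (-(n + 1 : ℕ) : ℤ) 1 (-n : ℤ)
          (by push_cast; ring)).app (∐ X))
        let P : C := (d.u.obj (((∐ X)⟦(-(n + 1 : ℕ) : ℤ)⟧)⟦(1 : ℤ)⟧))⟦(-1 : ℤ)⟧
        have hP : P ∈ 𝒰 := by
          apply h.mem_left
          intro B hB f
          obtain ⟨s, hs⟩ := (d.adj_v P B hB).2 f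
          have hs0 : s = 0 := (key n).eq_of_src _ _
          rw [← hs, hs0]
          exact comp_zero
        exact h.left_iso ((shiftFunctorAdd' C (-n : ℤ) (-1) (-(n + 1 : ℕ) : ℤ)
          (by push_cast; ring)).app _ ≪≫ (shiftFunctor C (-1 : ℤ)).mapIso (e ≪≫ e')) hP
    have hz : IsZero (d.u.obj (∐ X)) := by
      apply hnd₁
      intro n
      obtain ⟨n, rfl | rfl⟩ := n.eq_nat_or_neg
      · exact h.left_shift ht (d.mem_u _) n
      · exact hneg n
    apply h.mem_right
    intro B hB f
    obtain ⟨s, hs⟩ := (d.adj_u B _ hB).2 f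
    have hs0 : s = 0 := hz.eq_of_tgt _ _
    rw [← hs, hs0]
    exact zero_comp
  · intro H I X W hW f
    have := h.u_preserves ht d H I
    let F : C ⥤ C := shiftFunctor C (1 : ℤ) ⋙ d.u ⋙ shiftFunctor C (-1 : ℤ)
    have hF : PreservesColimitsOfShape (Discrete I) F := by
      dsimp only [F]; infer_instance
    let hc := isColimitOfHasCoproductOfPreservesColimit F X
    exact existsUnique_of_colimit F d.v d.π X W (fun Y => d.adj_v Y W hW.2) hc f
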